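/- Fix a real number c with 0 < c < 1. Then there exist ε ∈ (0, c²) and a constant C > 0 such that for all real t with 0 < t < ε, | ∫_{t/c}^{c} (π/|log t|)·(1/ sin(π·(log z)/(log t)))·(1/z) dz − 2·log(|log t|) | ≤ C. (For z ∈ (t/c, c) one has (log z)/(log t) ∈ (0,1), so the integrand is positive; this is the asymptotic computation of the diameter of the collar core of the model hyperbolic metric in a degenerating family of Riemann surfaces, showing it grows like 2·log(−log t) up to a bounded error.) -/

import Mathlib

/-!
The substitution `u = π log z / log t` turns the integral into `∫ csc u du` over `[θ, π - θ]`, where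
`θ = π log c / log t`. Since `log (tan (u / 2))` is a primitive of `csc u` and the interval is
symmetric about `π / 2`, the integral equals `-2 log (tan (θ / 2))`. For small `θ` the tangent is
comparable to `θ / 2 = (π |log c| / 2) / |log t|`, whose logarithm is a constant minus
`log |log t|`.
-/

open scoped Topology

section CollarIntegral

open Real Set

/- `Real.log` is `log |·|`, so this also covers `tan (x / 2) < 0`. -/
theorem hasDerivAt_log_tan_half {x : ℝ} (hx : sin x ≠ 0) :
    HasDerivAt (fun y ↦ log (tan (y / 2))) (1 / sin x) x := by
  have hdouble : sin x = 2 * sin (x / 2) * cos (x / 2) := by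
    rw [← sin_two_mul, mul_div_cancel₀ x two_ne_zero]
  have hsin : sin (x / 2) ≠ 0 := fun h ↦ hx (by simp [hdouble, h])
  have hcos : cos (x / 2) ≠ 0 := fun h ↦ hx (by simp [hdouble, h])
  have htan : tan (x / 2) ≠ 0 := by
    rw [tan_eq_sin_div_cos]
    exact div_ne_zero hsin hcos
  have hderiv : HasDerivAt (fun y ↦ tan (y / 2)) (1 / cos (x / 2) ^ 2 * (1 / 2)) x :=
    (hasDerivAt_tan hcos).comp x (h := (· / 2)) ((hasDerivAt_id' x).div_const 2)
  refine (hderiv.log htan).congr_deriv ?_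
  rw [hdouble, tan_eq_sin_div_cos]
  field_simp

theorem integral_one_div_sin {a b : ℝ} (h : ∀ x ∈ uIcc a b, sin x ≠ 0) :
    ∫ x in a..b, 1 / sin x = log (tan (b / 2)) - log (tan (a / 2)) :=
  intervalIntegral.integral_eq_sub_of_hasDerivAt (fun x hx ↦ hasDerivAt_log_tan_half (h x hx))
    (continuousOn_const.div continuousOn_sin h).intervalIntegrable

theorem integral_one_div_sin_pi_sub {θ : ℝ} (hθ : θ ∈ Ioo 0 π) :
    ∫ x in θ..(π - θ), 1 / sin x = -2 * log (tan (θ / 2)) := by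
  have hreflect : π - θ ∈ Ioo 0 π := ⟨sub_pos.2 hθ.2, sub_lt_self _ hθ.1⟩
  have hsin : ∀ x ∈ uIcc θ (π - θ), sin x ≠ 0 := fun x hx ↦
    (sin_pos_of_mem_Ioo (OrdConnected.uIcc_subset inferInstance hθ hreflect hx)).ne'
  rw [integral_one_div_sin hsin, sub_div, tan_pi_div_two_sub, log_inv]
  ring

theorem integral_inv_smul_comp_log {E : Type*} [NormedAddCommGroup E] [NormedSpace ℝ E]
    {a b : ℝ} (ha : 0 < a) (hb : 0 < b) (g : ℝ → E) :
    ∫ z in a..b, z⁻¹ • g (log z) = ∫ y in log a..log b, g y := by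
  have hpos : ∀ z ∈ uIcc a b, 0 < z := fun z hz ↦ (lt_min ha hb).trans_le hz.1
  refine intervalIntegral.integral_deriv_smul_comp_of_deriv_nonneg
    (continuousOn_id.log fun z hz ↦ (hpos z hz).ne') (fun z hz ↦ ?_) (fun z hz ↦ ?_)
  · exact hasDerivAt_log (hpos z (Ioo_subset_Icc_self hz)).ne'
  · exact inv_nonneg.2 (hpos z (Ioo_subset_Icc_self hz)).le

theorem integral_collar_eq {c t : ℝ} (hc0 : 0 < c) (hc1 : c < 1) (ht0 : 0 < t) (htc : t < c) :
    ∫ z in (t / c)..c, (π / |log t|) * (1 / sin (π * log z / log t)) * (1 / z) =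
      -2 * log (tan (π * log c / log t / 2)) := by
  have hlogc : log c < 0 := log_neg hc0 hc1
  have hlogtc : log t < log c := log_lt_log ht0 htc
  have hlogt : log t < 0 := hlogtc.trans hlogc
  set k := π / log t with hk
  set θ := π * log c / log t with hθ
  have hθ_mem : θ ∈ Ioo 0 π := by
    refine ⟨div_pos_of_neg_of_neg (mul_neg_of_pos_of_neg pi_pos hlogc) hlogt, ?_⟩
    rw [hθ, div_lt_iff_of_neg hlogt]
    exact mul_lt_mul_of_pos_left hlogtc pi_pos
  have hupper : log c * k = θ := by rw [hk, hθ]; ring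
  have hlower : log (t / c) * k = π - θ := by
    rw [log_div ht0.ne' hc0.ne', hk, hθ]
    field_simp [hlogt.ne]
  calc ∫ z in (t / c)..c, (π / |log t|) * (1 / sin (π * log z / log t)) * (1 / z)
      = ∫ z in (t / c)..c, z⁻¹ • (-(k * (1 / sin (log z * k)))) := by
        congr with z
        rw [abs_of_neg hlogt, div_neg, ← hk, mul_div_right_comm, ← hk, mul_comm k (log z),
          smul_eq_mul]
        ring
    _ = ∫ y in log (t / c)..log c, -(k * (1 / sin (y * k))) :=
        integral_inv_smul_comp_log (div_pos ht0 hc0) hc0 fun y ↦ -(k * (1 / sin (y * k)))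
    _ = -∫ u in (π - θ)..θ, 1 / sin u := by
        rw [intervalIntegral.integral_neg, intervalIntegral.integral_const_mul,
          intervalIntegral.mul_integral_comp_mul_right (f := fun u ↦ 1 / sin u), hlower, hupper]
    _ = -2 * log (tan (θ / 2)) := by
        rw [← intervalIntegral.integral_symm, integral_one_div_sin_pi_sub hθ_mem]

theorem tan_le_two_mul {x : ℝ} (hx0 : 0 ≤ x) (hx : x ≤ π / 3) : tan x ≤ 2 * x := by
  have hcos : 1 / 2 ≤ cos x := by
    rw [← cos_pi_div_three]
    exact cos_le_cos_of_nonneg_of_le_pi hx0 (by linarith [pi_pos]) hx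
  rw [tan_eq_sin_div_cos, div_le_iff₀ (by linarith)]
  calc sin x ≤ x := sin_le hx0
    _ = 2 * x * (1 / 2) := by ring
    _ ≤ 2 * x * cos x := by gcongr

theorem abs_log_tan_sub_log_le {x : ℝ} (hx0 : 0 < x) (hx : x ≤ π / 3) :
    |log (tan x) - log x| ≤ log 2 := by
  have hle_tan : x ≤ tan x := le_tan hx0.le (by linarith [pi_pos])
  have hlower : log x ≤ log (tan x) := log_le_log hx0 hle_tan
  have hupper : log (tan x) ≤ log 2 + log x := by
    rw [← log_mul two_ne_zero hx0.ne']
    exact log_le_log (hx0.trans_le hle_tan) (tan_le_two_mul hx0.le hx)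
  rw [abs_of_nonneg (sub_nonneg.2 hlower)]
  linarith

theorem abs_neg_two_mul_log_tan_sub_le {A T : ℝ} (hA : 0 < A) (hT : 0 < T)
    (hAT : A / T ≤ π / 3) :
    |-2 * log (tan (A / T)) - 2 * log T| ≤ 2 * log 2 + 2 * |log A| := by
  have htan := abs_log_tan_sub_log_le (div_pos hA hT) hAT
  calc |-2 * log (tan (A / T)) - 2 * log T|
      = |-2 * (log (tan (A / T)) - log (A / T)) + -2 * log A| := by
        rw [log_div hA.ne' hT.ne']
        ring_nf
    _ ≤ |-2 * (log (tan (A / T)) - log (A / T))| + |-2 * log A| := abs_add_le _ _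
    _ = 2 * |log (tan (A / T)) - log (A / T)| + 2 * |log A| := by
        simp only [abs_mul, abs_neg, abs_two]
    _ ≤ 2 * log 2 + 2 * |log A| := by gcongr

end CollarIntegral

/-- **Statement 16.** For fixed `0 < c < 1`, there are `ε ∈ (0, c²)` and `C > 0` such that for
all `0 < t < ε` the diameter integral of the collar core of the model hyperbolic metric,
`∫_{t/c}^{c} (π/|log t|)·csc(π·(log z)/(log t))·(1/z) dz`, differs from `2·log(|log t|)` by at
most `C`. -/
theorem statement16 (c : ℝ) (hc0 : 0 < c) (hc1 : c < 1) :
    ∃ ε : ℝ, 0 < ε ∧ ε < c ^ 2 ∧ ∃ C : ℝ, 0 < C ∧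
      ∀ t : ℝ, 0 < t → t < ε →
        abs ((∫ z in (t / c)..c,
            (Real.pi / |Real.log t|) * (1 / Real.sin (Real.pi * Real.log z / Real.log t)) *
              (1 / z)) -
          2 * Real.log |Real.log t|) ≤ C := by
  have hlogc : Real.log c < 0 := Real.log_neg hc0 hc1
  set A := Real.pi * |Real.log c| / 2 with hA
  have hA_pos : 0 < A := half_pos (mul_pos Real.pi_pos (abs_pos.2 hlogc.ne))
  refine ⟨c ^ 3, pow_pos hc0 3, pow_lt_pow_right_of_lt_one₀ hc0 hc1 (by norm_num),
    2 * Real.log 2 + 2 * |Real.log A|, by positivity, fun t ht0 ht ↦ ?_⟩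
  have htc : t < c := ht.trans (pow_lt_self_of_lt_one₀ hc0 hc1 (by norm_num))
  have hlogt : Real.log t < 3 * Real.log c := by
    simpa only [Real.log_pow, Nat.cast_ofNat] using Real.log_lt_log ht0 ht
  have hlogt_neg : Real.log t < 0 := by linarith
  have hangle : Real.pi * Real.log c / Real.log t / 2 = A / |Real.log t| := by
    rw [hA, abs_of_neg hlogc, abs_of_neg hlogt_neg, mul_neg, neg_div, neg_div_neg_eq]
    ring
  have hangle_le : A / |Real.log t| ≤ Real.pi / 3 := by
    rw [div_le_iff₀ (abs_pos.2 hlogt_neg.ne), hA, abs_of_neg hlogc, abs_of_neg hlogt_neg]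
    nlinarith [Real.pi_pos]
  rw [integral_collar_eq hc0 hc1 ht0 htc, hangle]
  exact abs_neg_two_mul_log_tan_sub_le hA_pos (abs_pos.2 hlogt_neg.ne) hangle_le
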